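/- Let Φ be a Hawkes kernel matrix satisfying hypothesis (H), and suppose in addition that every entry of Φ is bounded almost everywhere by a constant φ_∞ ≥ 0. Let Ψ = Σ_{k=1}^∞ Φ^{⋆k}. Then for almost every t ∈ ℝ and all 1 ≤ i,j ≤ D, Ψ^{ij}(t) ≤ φ_∞ · (𝟙 (I − ‖Φ‖)^{−1})^{ij}, where 𝟙 denotes the D×D matrix whose entries are all equal to 1. -/

import Mathlib

open MeasureTheory Matrix Filter Set

/-- Entrywise matrix convolution:
`(A ⋆ B)^{ij}(t) = ∑_{k} ∫ A^{ik}(s) B^{kj}(t - s) ds`. -/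
noncomputable def mconv (D : ℕ) (A B : ℝ → Matrix (Fin D) (Fin D) ℝ) :
    ℝ → Matrix (Fin D) (Fin D) ℝ :=
  fun t => Matrix.of fun i j => ∑ k : Fin D, ∫ s : ℝ, A s i k * B (t - s) k j

/-- `mconvIter D Φ k` is the `(k+1)`-fold matrix convolution `Φ^{⋆(k+1)}`. -/
noncomputable def mconvIter (D : ℕ) (Φ : ℝ → Matrix (Fin D) (Fin D) ℝ) :
    ℕ → ℝ → Matrix (Fin D) (Fin D) ℝ
  | 0 => Φ
  | (k + 1) => mconv D Φ (mconvIter D Φ k)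

/-- `Ψ = ∑_{k=1}^∞ Φ^{⋆k}`, defined entrywise as a pointwise sum. -/
noncomputable def hawkesPsi (D : ℕ) (Φ : ℝ → Matrix (Fin D) (Fin D) ℝ) :
    ℝ → Matrix (Fin D) (Fin D) ℝ :=
  fun t => Matrix.of fun i j => ∑' k : ℕ, mconvIter D Φ k t i j

/-- The matrix `‖Φ‖` of `L¹` norms: `‖Φ‖^{ij} = ∫ φ^{ij}(t) dt` (entries nonnegative). -/
noncomputable def kernelNorm (D : ℕ) (Φ : ℝ → Matrix (Fin D) (Fin D) ℝ) :
    Matrix (Fin D) (Fin D) ℝ :=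
  Matrix.of fun i j => ∫ t : ℝ, Φ t i j

/-- A Hawkes kernel matrix: measurable, nonnegative, integrable and causal entries. -/
def IsHawkesKernel (D : ℕ) (Φ : ℝ → Matrix (Fin D) (Fin D) ℝ) : Prop :=
  (∀ i j, Measurable fun t => Φ t i j) ∧
  (∀ t, ∀ i j, 0 ≤ Φ t i j) ∧
  (∀ i j, Integrable fun t => Φ t i j) ∧
  (∀ t < (0 : ℝ), Φ t = 0)

/-- Hypothesis (H): the spectral radius of `‖Φ‖` is strictly smaller than 1. -/
def HypothesisH (D : ℕ) (Φ : ℝ → Matrix (Fin D) (Fin D) ℝ) : Prop :=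
  spectralRadius ℂ ((kernelNorm D Φ).map Complex.ofReal) < 1

/-- `q(t) = Σ Ψ(-t)ᵀ Σ⁻¹`. -/
noncomputable def hawkesQ (D : ℕ) (Φ : ℝ → Matrix (Fin D) (Fin D) ℝ)
    (S : Matrix (Fin D) (Fin D) ℝ) : ℝ → Matrix (Fin D) (Fin D) ℝ :=
  fun t => S * (hawkesPsi D Φ (-t))ᵀ * S⁻¹

/-- The conditional-expectation matrix
`g(t) = Ψ(t) + Σ Ψ(-t)ᵀ Σ⁻¹ + (Ψ ⋆ q)(t)`. -/
noncomputable def hawkesG (D : ℕ) (Φ : ℝ → Matrix (Fin D) (Fin D) ℝ)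
    (S : Matrix (Fin D) (Fin D) ℝ) : ℝ → Matrix (Fin D) (Fin D) ℝ :=
  fun t => hawkesPsi D Φ t + hawkesQ D Φ S t +
    mconv D (hawkesPsi D Φ) (hawkesQ D Φ S) t

/-- Entrywise Laplace transform `F̂(z) = ∫ F(t) e^{zt} dt`. -/
noncomputable def mlaplace (D : ℕ) (F : ℝ → Matrix (Fin D) (Fin D) ℝ) (z : ℂ) :
    Matrix (Fin D) (Fin D) ℂ :=
  Matrix.of fun i j => ∫ t : ℝ, (F t i j : ℂ) * Complex.exp (z * t)

/-!
Only the first factor of `Φ^{⋆(n+1)} = Φ ⋆ Φ^{⋆n}` is estimated by `φ_∞`; the remaining `n` factors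
contribute their integrals, which Fubini turns into `‖Φ‖ⁿ`. Thus every entry of `Φ^{⋆(n+1)}` is at
most the corresponding entry of `φ_∞ 𝟙 ‖Φ‖ⁿ`. By Gelfand's formula the powers of `‖Φ‖` are
summable, and summing the Neumann series gives `φ_∞ 𝟙 (I - ‖Φ‖)⁻¹`.
-/

section NeumannSeries

theorem summable_norm_pow_of_spectralRadius_lt_one {A : Type*} [NormedRing A] [NormedAlgebra ℂ A]
    [CompleteSpace A] {a : A} (ha : spectralRadius ℂ a < 1) : Summable fun n : ℕ ↦ ‖a ^ n‖ := by
  obtain ⟨r, har, hr⟩ := ENNReal.lt_iff_exists_nnreal_btwn.1 ha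
  have root_lt : ∀ᶠ n : ℕ in atTop, (‖a ^ n‖₊ : ENNReal) ^ (1 / n : ℝ) < r :=
    (spectrum.pow_nnnorm_pow_one_div_tendsto_nhds_spectralRadius a).eventually_lt_const har
  refine .of_norm_bounded_eventually_nat
    (summable_geometric_of_lt_one r.coe_nonneg (mod_cast hr)) ?_
  filter_upwards [root_lt, eventually_gt_atTop 0] with n hn hn_pos
  have pow_lt : (‖a ^ n‖₊ : ENNReal) < (r : ENNReal) ^ n := by
    rwa [one_div, ENNReal.rpow_inv_lt_iff (mod_cast hn_pos), ENNReal.rpow_natCast] at hn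
  rw [norm_norm]
  exact_mod_cast pow_lt.le

variable {n : Type*} [Fintype n] [DecidableEq n]

theorem summable_matrix_pow_of_spectralRadius_lt_one {M : Matrix n n ℂ}
    (hM : spectralRadius ℂ M < 1) : Summable fun k : ℕ ↦ M ^ k := by
  let : NormedRing (Matrix n n ℂ) := Matrix.linftyOpNormedRing
  let : NormedAlgebra ℂ (Matrix n n ℂ) := Matrix.linftyOpNormedAlgebra
  exact (summable_norm_pow_of_spectralRadius_lt_one hM).of_norm

theorem summable_real_matrix_pow_of_spectralRadius_lt_one {M : Matrix n n ℝ}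
    (hM : spectralRadius ℂ (M.map Complex.ofReal) < 1) : Summable fun k : ℕ ↦ M ^ k := by
  have map_pow_eq (k : ℕ) : M.map Complex.ofReal ^ k = (M ^ k).map Complex.ofReal :=
    (map_pow Complex.ofRealHom.mapMatrix M k).symm
  have hsum := summable_matrix_pow_of_spectralRadius_lt_one hM
  simp only [map_pow_eq] at hsum
  exact Pi.summable.2 fun i ↦ Pi.summable.2 fun j ↦
    Complex.summable_ofReal.1 (Pi.summable.1 (Pi.summable.1 hsum i) j)

theorem hasSum_matrix_pow_of_summable {R : Type*} [CommRing R] [TopologicalSpace R]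
    [IsTopologicalRing R] [T2Space R] {M : Matrix n n R} (hM : Summable fun k : ℕ ↦ M ^ k) :
    HasSum (fun k : ℕ ↦ M ^ k) (1 - M)⁻¹ := by
  rw [Matrix.inv_eq_right_inv hM.one_sub_mul_tsum_pow]
  exact hM.hasSum

end NeumannSeries

section MatrixConvolution

open scoped Convolution

variable {D : ℕ} {A B : ℝ → Matrix (Fin D) (Fin D) ℝ}

theorem mconv_entry_eq_sum_convolution (i j : Fin D) :
    (fun t ↦ mconv D A B t i j) = fun t ↦
      ∑ k, ((fun s ↦ A s i k) ⋆[ContinuousLinearMap.mul ℝ ℝ, volume] fun s ↦ B s k j) t :=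
  rfl

theorem integrable_mconv (hA : ∀ i j, Integrable fun t ↦ A t i j)
    (hB : ∀ i j, Integrable fun t ↦ B t i j) (i j : Fin D) :
    Integrable fun t ↦ mconv D A B t i j := by
  rw [mconv_entry_eq_sum_convolution]
  exact integrable_finsetSum _ fun k _ ↦ (hA i k).integrable_convolution _ (hB k j)

theorem kernelNorm_mconv (hA : ∀ i j, Integrable fun t ↦ A t i j)
    (hB : ∀ i j, Integrable fun t ↦ B t i j) :
    kernelNorm D (mconv D A B) = kernelNorm D A * kernelNorm D B := by
  ext i j
  rw [kernelNorm, of_apply, mconv_entry_eq_sum_convolution,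
    integral_finsetSum _ fun k _ ↦ (hA i k).integrable_convolution _ (hB k j), mul_apply]
  exact Finset.sum_congr rfl fun k _ ↦ integral_convolution _ (hA i k) (hB k j)

theorem mconv_nonneg (hA : ∀ i j, ∀ᵐ t, 0 ≤ A t i j) (hB : ∀ i j, ∀ᵐ t, 0 ≤ B t i j)
    (t : ℝ) (i j : Fin D) : 0 ≤ mconv D A B t i j := by
  change 0 ≤ ∑ k, ∫ s, A s i k * B (t - s) k j
  refine Finset.sum_nonneg fun k _ ↦ integral_nonneg_of_ae ?_
  have hB_sub : ∀ᵐ s, 0 ≤ B (t - s) k j :=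
    (quasiMeasurePreserving_sub_left_of_right_invariant volume t).ae (hB k j)
  filter_upwards [hA i k, hB_sub] with s hAs hBs using mul_nonneg hAs hBs

theorem mconv_le_of_ae_le {c : ℝ} (hA : ∀ i j, ∀ᵐ t, 0 ≤ A t i j) (hAc : ∀ i j, ∀ᵐ t, A t i j ≤ c)
    (hB : ∀ i j, ∀ᵐ t, 0 ≤ B t i j) (hB_int : ∀ i j, Integrable fun t ↦ B t i j)
    (t : ℝ) (i j : Fin D) :
    mconv D A B t i j ≤ c * ((of fun _ _ ↦ 1 : Matrix (Fin D) (Fin D) ℝ) * kernelNorm D B) i j :=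
  calc
    ∑ k, ∫ s, A s i k * B (t - s) k j ≤ ∑ k, ∫ s, c * B (t - s) k j := by
      refine Finset.sum_le_sum fun k _ ↦ ?_
      have hB_sub : ∀ᵐ s, 0 ≤ B (t - s) k j :=
        (quasiMeasurePreserving_sub_left_of_right_invariant volume t).ae (hB k j)
      refine integral_mono_of_nonneg ?_ (((hB_int k j).comp_sub_left t).const_mul c) ?_
      · filter_upwards [hA i k, hB_sub] with s hAs hBs using mul_nonneg hAs hBs
      · filter_upwards [hAc i k, hB_sub] with s hAs hBs using mul_le_mul_of_nonneg_right hAs hBs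
    _ = ∑ k, c * kernelNorm D B k j := by
      refine Finset.sum_congr rfl fun k _ ↦ ?_
      rw [integral_const_mul, integral_sub_left_eq_self (fun s ↦ B s k j) volume t]
      rfl
    _ = _ := by simp only [mul_apply, of_apply, one_mul, Finset.mul_sum]

end MatrixConvolution

section IteratedConvolution

variable {D : ℕ} {Φ : ℝ → Matrix (Fin D) (Fin D) ℝ}

theorem integrable_mconvIter (hΦ : ∀ i j, Integrable fun t ↦ Φ t i j) (n : ℕ) (i j : Fin D) :
    Integrable fun t ↦ mconvIter D Φ n t i j := by
  induction n generalizing i j with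
  | zero => exact hΦ i j
  | succ n ih => exact integrable_mconv hΦ ih i j

theorem kernelNorm_mconvIter (hΦ : ∀ i j, Integrable fun t ↦ Φ t i j) (n : ℕ) :
    kernelNorm D (mconvIter D Φ n) = kernelNorm D Φ ^ (n + 1) := by
  induction n with
  | zero => exact (pow_one _).symm
  | succ n ih => rw [mconvIter, kernelNorm_mconv hΦ (integrable_mconvIter hΦ n), ih, ← pow_succ']

theorem ae_mconvIter_nonneg (hΦ : ∀ i j, ∀ᵐ t, 0 ≤ Φ t i j) (n : ℕ) (i j : Fin D) :
    ∀ᵐ t, 0 ≤ mconvIter D Φ n t i j := by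
  induction n generalizing i j with
  | zero => exact hΦ i j
  | succ n ih => exact ae_of_all _ fun t ↦ mconv_nonneg hΦ ih t i j

theorem ae_mconvIter_le {c : ℝ} (hΦ_int : ∀ i j, Integrable fun t ↦ Φ t i j)
    (hΦ : ∀ i j, ∀ᵐ t, 0 ≤ Φ t i j) (hΦc : ∀ i j, ∀ᵐ t, Φ t i j ≤ c) (n : ℕ) (i j : Fin D) :
    ∀ᵐ t, mconvIter D Φ n t i j ≤
      c * ((of fun _ _ ↦ 1 : Matrix (Fin D) (Fin D) ℝ) * kernelNorm D Φ ^ n) i j := by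
  cases n with
  | zero => simpa only [mconvIter, pow_zero, mul_one, of_apply] using hΦc i j
  | succ n =>
    rw [← kernelNorm_mconvIter hΦ_int]
    exact ae_of_all _ fun t ↦ mconv_le_of_ae_le hΦ hΦc (ae_mconvIter_nonneg hΦ n)
      (integrable_mconvIter hΦ_int n) t i j

end IteratedConvolution

theorem hawkesPsi_bounded_general {D : ℕ} {Φ : ℝ → Matrix (Fin D) (Fin D) ℝ}
    (hΦ_int : ∀ i j, Integrable fun t ↦ Φ t i j) (hΦ : ∀ i j, ∀ᵐ t, 0 ≤ Φ t i j)
    (hH : HypothesisH D Φ) {c : ℝ} (hΦc : ∀ i j, ∀ᵐ t, Φ t i j ≤ c) :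
    ∀ᵐ t, ∀ i j, hawkesPsi D Φ t i j ≤
      c * ((of fun _ _ ↦ 1 : Matrix (Fin D) (Fin D) ℝ) * (1 - kernelNorm D Φ)⁻¹) i j := by
  have neumann := hasSum_matrix_pow_of_summable
    (summable_real_matrix_pow_of_spectralRadius_lt_one hH)
  simp only [ae_all_iff]
  intro i j
  have hasSum_entry := Pi.hasSum.1 (Pi.hasSum.1 (neumann.mul_left (of fun _ _ ↦ 1)) i) j
  have hasSum_bound := hasSum_entry.mul_left c
  filter_upwards [ae_all_iff.2 fun n ↦ ae_mconvIter_nonneg hΦ n i j,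
    ae_all_iff.2 fun n ↦ ae_mconvIter_le hΦ_int hΦ hΦc n i j] with t nonneg le_bound
  have hsum : Summable fun n ↦ mconvIter D Φ n t i j :=
    hasSum_bound.summable.of_nonneg_of_le nonneg le_bound
  exact hasSum_le le_bound hsum.hasSum hasSum_bound

/-- If moreover every entry of `Φ` is a.e. bounded by `φ_∞`, then a.e.
`Ψ^{ij}(t) ≤ φ_∞ (𝟙 (I - ‖Φ‖)⁻¹)^{ij}` where `𝟙` is the all-ones matrix. -/
theorem hawkesPsi_bounded (D : ℕ) (hD : 0 < D)
    (Φ : ℝ → Matrix (Fin D) (Fin D) ℝ)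
    (hΦ : IsHawkesKernel D Φ) (hH : HypothesisH D Φ)
    (φinf : ℝ) (hφinf : 0 ≤ φinf)
    (hbound : ∀ i j, ∀ᵐ t : ℝ, Φ t i j ≤ φinf) :
    ∀ᵐ t : ℝ, ∀ i j, hawkesPsi D Φ t i j ≤
      φinf * ((((Matrix.of fun _ _ => (1 : ℝ)) : Matrix (Fin D) (Fin D) ℝ) * (1 - kernelNorm D Φ)⁻¹) i j) :=
  hawkesPsi_bounded_general hΦ.2.2.1 (fun i j ↦ ae_of_all _ fun t ↦ hΦ.2.1 t i j) hH hbound
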